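/- The following assertions are equivalent: (i) σ is a graph measure arising from powers of T; (ii) there exist integers e_2,…,e_d such that x_i = T^{e_i} x_1 for each i = 2,…,d; (iii) there exists n̲ such that for all n ≥ n̲, t_n(x_1) = ⋯ = t_n(x_d); (iv) there exist j ∈ ℤ and n̲ such that for all n ≥ n̲, t_n(T^j x_1) = ⋯ = t_n(T^j x_d). -/

import Mathlib

/-!
Everything rests on one elementary description of `T` in coordinates: inside tower `n` the map
`T` moves up one level, in the sense that `j_n(x) = j`, `j + 1 < h_n` imply `j_n(Tx) = j + 1`
(`NFC.T_succ`), and `j_n(Tx) = j + 1` implies `j_n(x) = j` (`NFC.T_pred`). Moreover any fixed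
number of iterates of `T` stays inside tower `n` once `n` is large (`NFC.iter_ev`). Two points lie
on the same `T`-orbit exactly when `T^a y = T^b z` for some naturals `a`, `b`, and this happens
exactly when `j_n(y) - j_n(z)` is eventually constant. Since `j_{n+1} - j_n` is determined by
`t_n`, the latter is the eventual equality of `t_n(y)` and `t_n(z)`
(`NFC.tcol_of_rel`, `NFC.rel_of_tcol`). This gives (ii) ⇔ (iii) ⇔ (iv).

(i) ⇒ (ii): every box around `x` is `σ`-positive, so it meets the graph; as the levels involved
are far from the top of tower `n`, a point of the graph in the `n`-box of `x` fixes the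
differences `j_n(x_i) - j_n(x_1)` independently of `n`.

(ii) ⇒ (i): boxes never visited by the orbit of `x` are `σ`-null by the ratio condition, so
`σ`-almost every `y` has all its boxes visited by the orbit of `x`. By the same argument on
differences, `T^K y_i = T^{k_i} y_1` for almost every `y`. The first marginal `ν` of `σ` is
`T`-invariant and finite on some level. Invariance forces all levels of tower `n` to
have the same `ν`-measure, which is three times that for tower `n + 1`; since levels form a
`π`-system generating the Borel sets, `ν` is a multiple of `μ` (`NFC.eq_smul_of_invariant`).
Invariance of `σ` under the `K`-th iterate then turns `σ(∏ A_i)` into `ν(⋂ T^{-k_i} A_i)`.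
-/


open MeasureTheory Set Filter Topology
open scoped ENNReal
open scoped Classical

noncomputable section

/-! ## The nearly finite Chacon transformation: symbolic model -/

/-- The alphabet `{*} ∪ ℕ` is modelled by `Option ℕ`, `none` playing the role of `*`. -/
instance optionNatTop : TopologicalSpace (Option ℕ) := ⊥

/-- The data of the two sequences `(n_ℓ)` and `(ℓ_k)` used in the construction of the
nearly finite Chacon transformation, together with the growth conditions imposed on them. -/
structure NFCseq where
  nseq : ℕ → ℕ
  lseq : ℕ → ℕ
  nseq_zero : nseq 0 = 0
  lseq_zero : lseq 0 = 1
  lseq_strictMono : StrictMono lseq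
  nseq_growth : ∀ ℓ : ℕ, 1 ≤ ℓ → nseq (ℓ - 1) + 2 * ℓ < nseq ℓ
  lseq_growth : ∀ k : ℕ, (2 : ℝ) ≤ (1 + ((7 : ℝ) ^ k)⁻¹) ^ (lseq (k + 1) - lseq k)

namespace NFCseq

/-- `k(ℓ)`: the unique `k` with `ℓ_k ≤ ℓ < ℓ_{k+1}`. -/
def kOf (P : NFCseq) (ℓ : ℕ) : ℕ := sSup {k | P.lseq k ≤ ℓ}

/-- The heights `h_n` of the towers. -/
def hgt (P : NFCseq) : ℕ → ℕ
  | 0 => 1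
  | n + 1 =>
    3 * P.hgt n +
      3 * (if hn : ∃ ℓ, 1 ≤ ℓ ∧ P.nseq ℓ = n then P.hgt (n - P.kOf (Nat.find hn)) else 0) + 1
termination_by n => n
decreasing_by all_goals omega

theorem hgt_pos (P : NFCseq) (n : ℕ) : 0 < P.hgt n := by
  cases n with
  | zero => simp [hgt]
  | succ n => rw [hgt]; omega

/-- The number of spacers put above the first subcolumn at step `n+1`
(`h_{n-k(ℓ)}` if `n = n_ℓ`, and `0` otherwise). -/
def spa (P : NFCseq) (n : ℕ) : ℕ :=
  if hn : ∃ ℓ, 1 ≤ ℓ ∧ P.nseq ℓ = n then P.hgt (n - P.kOf (Nat.find hn)) else 0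

/-- The map `p_n` sending the index of a level of tower `n+1` to the index of the level of
tower `n` containing it (`none` if that level lies outside tower `n`). -/
def pmap (P : NFCseq) (n j : ℕ) : Option ℕ :=
  if j < P.hgt n then some j
  else if j < P.hgt n + P.spa n then none
  else if j < 2 * P.hgt n + P.spa n then some (j - (P.hgt n + P.spa n))
  else if j < 2 * P.hgt n + 2 * P.spa n + 1 then none
  else if j < 3 * P.hgt n + 2 * P.spa n + 1 then some (j - (2 * P.hgt n + 2 * P.spa n + 1))
  else none

/-- The defining property of points of the space `X`. -/
def Xspec (P : NFCseq) (x : ℕ → Option ℕ) : Prop :=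
  (∀ n, x n = (x (n + 1)).bind (P.pmap n)) ∧ ∃ n, x n ≠ none

/-- The space `X` of the symbolic model, with its product (subspace) topology. -/
abbrev Xpt (P : NFCseq) : Type := {x : ℕ → Option ℕ // P.Xspec x}

instance (P : NFCseq) : MeasurableSpace P.Xpt := borel _

/-- `L_n^j`, the `j`-th level of tower `n`. -/
def level (P : NFCseq) (n j : ℕ) : Set P.Xpt := {x | x.1 n = some j}

/-- `C_n`, the union of all levels of tower `n`. -/
def tower (P : NFCseq) (n : ℕ) : Set P.Xpt := {x | x.1 n ≠ none}

theorem pmap_zero (P : NFCseq) (n : ℕ) : P.pmap n 0 = some 0 := by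
  unfold pmap
  simp [P.hgt_pos n]

/-- The point `𝟎 = (0,0,…)`. -/
def zeroPt (P : NFCseq) : P.Xpt :=
  ⟨fun _ => some 0, fun n => by
    show some 0 = (some 0).bind (P.pmap n)
    simp [P.pmap_zero n], 0, by simp⟩

/-- `t_n(x) ∈ {1,2,3}`: the subcolumn of tower `n` to which `x` belongs
(junk value `0` if `x` is not in tower `n+1`). -/
def tcol (P : NFCseq) (n : ℕ) (x : P.Xpt) : ℕ :=
  match x.1 (n + 1) with
  | none => 0
  | some j =>
    if j < P.hgt n + P.spa n then 1
    else if j < 2 * P.hgt n + 2 * P.spa n + 1 then 2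
    else 3

/-- The index (from `0` to `3^(m-n) - 1`, ordered from bottom to top of tower `m`) of the
occurrence of tower `n` inside tower `m` to which `x` belongs. -/
def occIdx (P : NFCseq) (n m : ℕ) (x : P.Xpt) : ℕ :=
  ∑ r ∈ Finset.Ico n m, (P.tcol r x - 1) * 3 ^ (r - n)

/-- `x` belongs to one of the first hundred occurrences of tower `n` inside tower `m`. -/
def inFirstHundred (P : NFCseq) (n m : ℕ) (x : P.Xpt) : Prop := P.occIdx n m x < 100

/-- `x` belongs to one of the last hundred occurrences of tower `n` inside tower `m`. -/
def inLastHundred (P : NFCseq) (n m : ℕ) (x : P.Xpt) : Prop :=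
  3 ^ (m - n) ≤ P.occIdx n m x + 100

end NFCseq

/-- The nearly finite Chacon transformation `T` together with its invariant measure `μ`. -/
structure NFC extends NFCseq where
  T : toNFCseq.Xpt → toNFCseq.Xpt
  μ : Measure toNFCseq.Xpt
  T_inj : Function.Injective T
  T_range : Set.range T = {toNFCseq.zeroPt}ᶜ
  T_up : ∀ x : toNFCseq.Xpt, ∃ N : ℕ, ∀ n, N ≤ n →
    ∃ j : ℕ, x.1 n = some j ∧ (T x).1 n = some (j + 1)
  T_meas : Measurable T
  μ_level : ∀ n j : ℕ, j < toNFCseq.hgt n →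
    μ (toNFCseq.level n j) = (3 : ℝ≥0∞)⁻¹ ^ n
  μ_pres : MeasurePreserving T μ μ
  μ_sfin : SigmaFinite μ

namespace NFC

/-- `X^d`. -/
abbrev Xd (S : NFC) (d : ℕ) : Type := Fin d → S.toNFCseq.Xpt

/-- The Cartesian power `T^{×d}`. -/
def Td (S : NFC) (d : ℕ) : S.Xd d → S.Xd d := fun y i => S.T (y i)

/-- `C_n^d`. -/
def towerD (S : NFC) (d n : ℕ) : Set (S.Xd d) := {y | ∀ i, y i ∈ S.toNFCseq.tower n}

/-- `B` is an `n`-box. -/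
def IsNBox (S : NFC) (d n : ℕ) (B : Set (S.Xd d)) : Prop :=
  ∃ v : Fin d → ℕ, (∀ i, v i < S.toNFCseq.hgt n) ∧
    B = {y : S.Xd d | ∀ i, y i ∈ S.toNFCseq.level n (v i)}

/-- A measure on `X^d` is Radon iff it is finite on each `C_n^d`. -/
def IsRadon (S : NFC) (d : ℕ) (σ : Measure (S.Xd d)) : Prop :=
  ∀ n, σ (S.towerD d n) < ⊤

/-- `σ` is `T^{×d}`-invariant. -/
def InvariantD (S : NFC) (d : ℕ) (σ : Measure (S.Xd d)) : Prop :=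
  ∀ A : Set (S.Xd d), MeasurableSet A → σ ((S.Td d) ⁻¹' A) = σ A

/-- `T^{-e} A`, the preimage of `A` under `T^e` for `e ∈ ℤ` (image for negative `e`). -/
def preT (S : NFC) : ℤ → Set S.toNFCseq.Xpt → Set S.toNFCseq.Xpt
  | Int.ofNat k, A => S.T^[k] ⁻¹' A
  | Int.negSucc k, A => S.T^[k + 1] '' A

/-- `σ` is a graph measure arising from powers of `T` on `X^ι`:
`σ(∏ᵢ Aᵢ) = α · μ(⋂ᵢ T^{-eᵢ} Aᵢ)`. -/
def IsGraphMeasure (S : NFC) {ι : Type} (σ : Measure (ι → S.toNFCseq.Xpt)) : Prop :=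
  ∃ α : ℝ≥0∞, 0 < α ∧ α ≠ ⊤ ∧ ∃ e : ι → ℤ,
    ∀ A : ι → Set S.toNFCseq.Xpt, (∀ i, MeasurableSet (A i)) →
      σ (Set.univ.pi A) = α * S.μ (⋂ i, S.preT (e i) (A i))

/-- `σ = σ^{D_1} ⊗ ⋯ ⊗ σ^{D_r}` for a partition `D_1, …, D_r` of `{1,…,d}` where each
`σ^{D_j}` is a graph measure on `X^{D_j}` arising from powers of `T`. -/
def IsProductOfGraphMeasures (S : NFC) (d : ℕ) (σ : Measure (S.Xd d)) : Prop :=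
  ∃ (r : ℕ) (D : Fin r → Finset (Fin d)),
    (∀ j, (D j).Nonempty) ∧
    (∀ j j', j ≠ j' → Disjoint (D j) (D j')) ∧
    (∀ i : Fin d, ∃ j, i ∈ D j) ∧
    ∃ σD : ∀ j : Fin r, Measure ({i // i ∈ D j} → S.toNFCseq.Xpt),
      (∀ j, S.IsGraphMeasure (σD j)) ∧
      ∀ A : Fin d → Set S.toNFCseq.Xpt, (∀ i, MeasurableSet (A i)) →
        σ (Set.univ.pi A) =
          ∏ j : Fin r, σD j (Set.univ.pi fun i : {i // i ∈ D j} => A i.1)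

end NFC


/-- `(T)^j W` for `j ∈ ℤ`: forward images for `j ≥ 0`, preimages for `j < 0`. -/
def iterZ {α : Type*} (f : α → α) : ℤ → Set α → Set α
  | Int.ofNat k, A => f^[k] '' A
  | Int.negSucc k, A => f^[k + 1] ⁻¹' A

namespace NFC

/-- `σ` is totally dissipative: there is a wandering set `W` whose `ℤ`-orbit covers
`X^d` up to a `σ`-null set. -/
def TotallyDissipative (S : NFC) (d : ℕ) (σ : Measure (S.Xd d)) : Prop :=
  ∃ W : Set (S.Xd d), MeasurableSet W ∧
    (∀ j j' : ℤ, j ≠ j' → Disjoint (iterZ (S.Td d) j W) (iterZ (S.Td d) j' W)) ∧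
    σ (⋃ j : ℤ, iterZ (S.Td d) j W)ᶜ = 0

/-- The ring `𝓡` of finite unions of `n`-boxes. -/
def BoxRing (S : NFC) (d : ℕ) : Set (Set (S.Xd d)) :=
  {B | ∃ n : ℕ, ∃ 𝔅 : Finset (Set (S.Xd d)), (∀ b ∈ 𝔅, S.IsNBox d n b) ∧ B = ⋃₀ ↑𝔅}

/-- Convergence of a sequence of Radon measures on `X^d`. -/
def RTendsto (S : NFC) (d : ℕ) (σk : ℕ → Measure (S.Xd d)) (σ : Measure (S.Xd d)) : Prop :=
  ∀ n : ℕ, 0 < σ (S.towerD d n) →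
    (∀ᶠ k in atTop, 0 < σk k (S.towerD d n)) ∧
    ∀ B : Set (S.Xd d), S.IsNBox d n B →
      Tendsto (fun k => σk k B / σk k (S.towerD d n)) atTop
        (𝓝 (σ B / σ (S.towerD d n)))

/-- The edge `∂C_n^d` of `C_n^d`. -/
def edgeD (S : NFC) (d n : ℕ) : Set (S.Xd d) :=
  {y | y ∈ S.towerD d n ∧ ∃ i, y i ∈ S.toNFCseq.level n 0 ∨
    y i ∈ S.toNFCseq.level n (S.toNFCseq.hgt n - 1)}

/-- `Ω_m`: the union of all `m`-boxes `L_m^{j_1} × ⋯ × L_m^{j_d}` with `j_i ≠ 0` for all `i`. -/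
def OmegaD (S : NFC) (d m : ℕ) : Set (S.Xd d) :=
  {y | ∀ i, ∃ j : ℕ, j ≠ 0 ∧ j < S.toNFCseq.hgt m ∧ y i ∈ S.toNFCseq.level m j}

/-- A twisting transformation on `X^d`: it applies `T` to the coordinates in a nonempty
proper subset `G_1 ⊆ {1,…,d}` and the identity to the others. -/
def IsTwist (S : NFC) (d : ℕ) (Sw : S.Xd d → S.Xd d) : Prop :=
  ∃ G : Fin d → Bool, (∃ i, G i = true) ∧ (∃ i, G i = false) ∧
    ∀ (y : S.Xd d) (i : Fin d), Sw y i = if G i then S.T (y i) else y i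

/-- The empirical measure `γ_J = ∑_{j ∈ J} δ_{(T^{×d})^j x}` along a two-sided orbit `o`. -/
def emp (S : NFC) (d : ℕ) (o : ℤ → S.Xd d) (J : Finset ℤ) : Measure (S.Xd d) :=
  ∑ j ∈ J, Measure.dirac (o j)

end NFC

/-- `J` is a (nonempty finite) interval of `ℤ`. -/
def IsIntervalZ (J : Finset ℤ) : Prop := ∃ a b : ℤ, a ≤ b ∧ J = Finset.Icc a b

namespace NFC

/-- `J` is an `n`-crossing for the orbit `o` of a point of `X^d`: a maximal interval on which
the orbit stays in `C_n^d` with all the `t_n(T^j x_i)` constant. -/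
def IsCrossing (S : NFC) (d : ℕ) (o : ℤ → S.Xd d) (n : ℕ) (J : Finset ℤ) : Prop :=
  IsIntervalZ J ∧
  (∀ j ∈ J, o j ∈ S.towerD d n) ∧
  (∀ i : Fin d, ∀ j ∈ J, ∀ j' ∈ J, S.toNFCseq.tcol n (o j i) = S.toNFCseq.tcol n (o j' i)) ∧
  ∀ J' : Finset ℤ, J ⊆ J' → IsIntervalZ J' →
    (∀ j ∈ J', o j ∈ S.towerD d n) →
    (∀ i : Fin d, ∀ j ∈ J', ∀ j' ∈ J', S.toNFCseq.tcol n (o j i) = S.toNFCseq.tcol n (o j' i)) →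
    J' = J

/-- An `n`-crossing is synchronized if `t_n(T^j x_1) = ⋯ = t_n(T^j x_d)` on it. -/
def IsSync (S : NFC) (d : ℕ) (o : ℤ → S.Xd d) (n : ℕ) (J : Finset ℤ) : Prop :=
  ∀ j ∈ J, ∀ i i' : Fin d, S.toNFCseq.tcol n (o j i) = S.toNFCseq.tcol n (o j i')

end NFC

/-- The interval `I_n` of length `h_n` centered at `0`. -/
def Imid (P : NFCseq) (n : ℕ) : Finset ℤ :=
  Finset.Icc (-((P.hgt n / 2 : ℕ) : ℤ)) (-((P.hgt n / 2 : ℕ) : ℤ) + P.hgt n - 1)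

namespace NFC

/-- A substantial `n`-crossing: an `n`-crossing whose intersection with `I_n` has at least
`η·h_n` elements. -/
def IsSubstantial (S : NFC) (d : ℕ) (o : ℤ → S.Xd d) (η : ℝ) (n : ℕ) (J : Finset ℤ) : Prop :=
  S.IsCrossing d o n J ∧ η * S.toNFCseq.hgt n ≤ ((J ∩ Imid S.toNFCseq n).card : ℝ)

/-- `x_i` climbs into tower `n` along the interval `I`. -/
def Climbs (S : NFC) (d : ℕ) (o : ℤ → S.Xd d) (i : Fin d) (n : ℕ) (I : Finset ℤ) : Prop :=
  (∀ j ∈ I, (o j) i ∈ S.toNFCseq.tower n) ∧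
  ¬ ∃ j : ℤ, j ∈ I ∧ j + 1 ∈ I ∧
      (o j) i ∈ S.toNFCseq.level n (S.toNFCseq.hgt n - 1) ∧
      (o (j + 1)) i ∈ S.toNFCseq.level n 0

end NFC

/-- The nearly finite Chacon system together with the conull set `X_∞` and the function
`x ↦ ℓ(x)` of Lemma 2.3. -/
structure NFCX extends NFC where
  Xinf : Set toNFCseq.Xpt
  ellx : toNFCseq.Xpt → ℕ
  Xinf_conull : μ Xinfᶜ = 0
  Xinf_spec : ∀ x ∈ Xinf, ∀ ℓ : ℕ, ellx x ≤ ℓ → ∀ n : ℕ,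
    nseq (ℓ - 1) ≤ n → n + ℓ ≤ nseq ℓ →
      x ∈ toNFCseq.tower n ∧ ¬ toNFCseq.inFirstHundred n (nseq ℓ) x ∧
        ¬ toNFCseq.inLastHundred n (nseq ℓ) x

namespace NFCX

/-- `o` is the two-sided orbit of a `σ`-typical point `x = o 0` (satisfying
conditions (1), (2) and (3) of Section 3.4 of the paper). -/
def IsTypicalOrbit (S : NFCX) (d : ℕ) (σ : Measure (S.toNFC.Xd d))
    (o : ℤ → S.toNFC.Xd d) : Prop :=
  (∀ j : ℤ, S.toNFC.Td d (o j) = o (j + 1)) ∧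
  (∀ j : ℤ, ∀ n : ℕ, 0 < σ (S.toNFC.towerD d n) →
    ∀ B : Set (S.toNFC.Xd d), S.toNFC.IsNBox d n B →
    ∀ a b : ℕ → ℤ, (∀ k, a k ≤ 0) → (∀ k, 0 ≤ b k) →
      Tendsto (fun k => b k - a k) atTop atTop →
      Tendsto (fun k =>
          (((Finset.Icc (a k) (b k)).filter (fun j' => o (j + j') ∈ B)).card : ℝ) /
            (((Finset.Icc (a k) (b k)).filter
              (fun j' => o (j + j') ∈ S.toNFC.towerD d n)).card : ℝ))
        atTop (𝓝 ((σ B).toReal / (σ (S.toNFC.towerD d n)).toReal))) ∧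
  (∀ n : ℕ, ∀ B : Set (S.toNFC.Xd d), S.toNFC.IsNBox d n B → o 0 ∈ B → 0 < σ B) ∧
  (∀ i : Fin d, (o 0) i ∈ S.Xinf)

end NFCX

/-! ## Subsets of `ℤ` of order `ℓ` inside an interval -/

/-- A piece of `F ∩ I`: a maximal interval included in `F ∩ I`. -/
def IsPieceZ (F : Set ℤ) (I : Finset ℤ) (J : Finset ℤ) : Prop :=
  IsIntervalZ J ∧ (↑J : Set ℤ) ⊆ F ∩ ↑I ∧
    ∀ J' : Finset ℤ, IsIntervalZ J' → (↑J' : Set ℤ) ⊆ F ∩ ↑I → J ⊆ J' → J' = J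

/-- A hole of `F ∩ I`: a maximal interval included in `I \ F`. -/
def IsHoleZ (F : Set ℤ) (I : Finset ℤ) (J : Finset ℤ) : Prop :=
  IsIntervalZ J ∧ (↑J : Set ℤ) ⊆ (↑I : Set ℤ) \ F ∧
    ∀ J' : Finset ℤ, IsIntervalZ J' → (↑J' : Set ℤ) ⊆ (↑I : Set ℤ) \ F → J ⊆ J' → J' = J

/-- Each hole of `F ∩ I` has size at most `s`. -/
def HolesSmall (F : Set ℤ) (I : Finset ℤ) (s : ℕ) : Prop :=
  ∀ H : Finset ℤ, IsHoleZ F I H → H.card ≤ s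

/-- Two consecutive holes of `F ∩ I` are always separated by a piece of size at least `c`. -/
def HolesSeparated (F : Set ℤ) (I : Finset ℤ) (c : ℕ) : Prop :=
  ∀ H₁ H₂ : Finset ℤ, IsHoleZ F I H₁ → IsHoleZ F I H₂ →
    (∀ a ∈ H₁, ∀ b ∈ H₂, a < b) →
    ∃ J : Finset ℤ, IsPieceZ F I J ∧ c ≤ J.card ∧ ∀ a ∈ H₁, ∀ b ∈ H₂, ∀ x ∈ J, a < x ∧ x < b

/-- `F` is of order `ℓ ≥ 1` inside the interval `I`, with respect to the sequences `c`, `s`. -/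
def IsOrder (c s : ℕ → ℕ) : ℕ → Set ℤ → Finset ℤ → Prop
  | 0, _, _ => False
  | 1, F, I => HolesSmall F I (s 1) ∧ HolesSeparated F I (c 1)
  | (ℓ + 2), F, I => ∃ F' : Set ℤ, F ⊆ F' ∧ HolesSmall F' I (s (ℓ + 2)) ∧
      HolesSeparated F' I (c (ℓ + 2)) ∧
      ∀ J : Finset ℤ, IsPieceZ F' I J → IsOrder c s (ℓ + 1) F J

/-- `p_1`: the smallest integer such that `3^{p_1} > 2d+1` and `p_1 > d`. -/
def pOne (d : ℕ) : ℕ := sInf {p : ℕ | 2 * d + 1 < 3 ^ p ∧ d < p}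

/-- `p_2`: the smallest integer such that `1/3^{p_2} < η/3`. -/
def pTwo (η : ℝ) : ℕ := sInf {p : ℕ | ((3 : ℝ) ^ p)⁻¹ < η / 3}



/-! ### Coordinates of points of the symbolic model -/

namespace NFCseq

variable {P : NFCseq}

theorem hgt_succ_eq (P : NFCseq) (n : ℕ) : P.hgt (n + 1) = 3 * P.hgt n + 3 * P.spa n + 1 := by
  rw [hgt, spa]

theorem lt_hgt (P : NFCseq) (n : ℕ) : n < P.hgt n := by
  induction n with
  | zero => exact P.hgt_pos 0
  | succ n ih => rw [hgt_succ_eq]; omega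

theorem pmap_eq_some {n a b : ℕ} : P.pmap n a = some b ↔
    b < P.hgt n ∧ (a = b ∨ a = b + P.hgt n + P.spa n ∨
      a = b + 2 * P.hgt n + 2 * P.spa n + 1) := by
  have := P.hgt_pos n
  unfold pmap
  split_ifs <;> simp only [Option.some.injEq, false_iff] <;> omega

/-- Passing from tower `n` to tower `n + 1`: the index increases by an amount determined by
`t_n`. -/
theorem lift_step {x : P.Xpt} {n b : ℕ} (h : x.1 n = some b) :
    b < P.hgt n ∧ ∃ a, x.1 (n + 1) = some a ∧ P.pmap n a = some b ∧
      ((a = b ∧ P.tcol n x = 1) ∨ (a = b + P.hgt n + P.spa n ∧ P.tcol n x = 2) ∨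
        (a = b + 2 * P.hgt n + 2 * P.spa n + 1 ∧ P.tcol n x = 3)) := by
  have h1 := x.2.1 n
  rw [h] at h1
  obtain ⟨a, ha, hab⟩ := Option.bind_eq_some_iff.1 h1.symm
  have h2 := pmap_eq_some.1 hab
  refine ⟨h2.1, a, ha, hab, ?_⟩
  have ht : P.tcol n x = if a < P.hgt n + P.spa n then 1
      else if a < 2 * P.hgt n + 2 * P.spa n + 1 then 2 else 3 := by
    simp only [tcol, ha]
  rw [ht]
  obtain ⟨h3, h4⟩ := h2
  split_ifs <;> omega

theorem val_lt {x : P.Xpt} {n b : ℕ} (h : x.1 n = some b) : b < P.hgt n := (lift_step h).1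

theorem proj_step {x : P.Xpt} {n a : ℕ} (h : x.1 (n + 1) = some a) : x.1 n = P.pmap n a := by
  rw [x.2.1 n, h]; rfl

theorem ev_some (x : P.Xpt) : ∃ N, ∀ n, N ≤ n → ∃ j, x.1 n = some j := by
  obtain ⟨N, hN⟩ := x.2.2
  refine ⟨N, fun n hn => ?_⟩
  induction n, hn using Nat.le_induction with
  | base => exact Option.ne_none_iff_exists'.1 hN
  | succ n _ ih =>
    obtain ⟨j, hj⟩ := ih
    obtain ⟨_, a, ha, _⟩ := lift_step hj
    exact ⟨a, ha⟩

theorem eq_down {x y : P.Xpt} {n m : ℕ} (hnm : n ≤ m) (h : x.1 m = y.1 m) : x.1 n = y.1 n := by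
  induction m, hnm using Nat.le_induction with
  | base => exact h
  | succ m _ ih => exact ih (by rw [x.2.1 m, y.2.1 m, h])

theorem ext_freq {x y : P.Xpt} (h : ∀ N, ∃ n, N ≤ n ∧ x.1 n = y.1 n) : x = y := by
  apply Subtype.ext
  funext n
  obtain ⟨m, hm, he⟩ := h n
  exact eq_down hm he

/-! ### Levels as a basis of the Borel structure -/

theorem isOpen_level (P : NFCseq) (n j : ℕ) : IsOpen (P.level n j) := by
  have : DiscreteTopology (Option ℕ) := ⟨rfl⟩
  have hc : Continuous (fun x : P.Xpt => x.1 n) :=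
    (continuous_apply n).comp continuous_subtype_val
  exact (isOpen_discrete ({some j} : Set (Option ℕ))).preimage hc

theorem measurableSet_level (P : NFCseq) (n j : ℕ) : MeasurableSet (P.level n j) := by
  have : BorelSpace P.Xpt := ⟨rfl⟩
  exact (P.isOpen_level n j).measurableSet

/-- The `π`-system formed by all levels of all towers together with the empty set. -/
def levels (P : NFCseq) : Set (Set P.Xpt) := {A | A = ∅ ∨ ∃ n j, A = P.level n j}

theorem exists_level_subset {U : Set P.Xpt} (hU : IsOpen U) {x : P.Xpt} (hx : x ∈ U) :
    ∃ n j, x ∈ P.level n j ∧ P.level n j ⊆ U := by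
  obtain ⟨V, hV, rfl⟩ := isOpen_induced_iff.1 hU
  obtain ⟨I, u, hu, hsub⟩ := isOpen_pi_iff.1 hV x.1 hx
  obtain ⟨N, hN⟩ := ev_some x
  obtain ⟨j, hj⟩ := hN (max N (I.sup id)) (le_max_left _ _)
  refine ⟨_, j, hj, fun y hy => hsub fun i hi => ?_⟩
  have hi' : i ≤ max N (I.sup id) := le_max_of_le_right (Finset.le_sup (f := id) hi)
  have : y.1 i = x.1 i := eq_down hi' (Eq.trans hy hj.symm)
  rw [this]
  exact (hu i hi).2

theorem borel_eq_levels (P : NFCseq) :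
    (inferInstance : MeasurableSpace P.Xpt) = MeasurableSpace.generateFrom P.levels := by
  apply le_antisymm
  · refine MeasurableSpace.generateFrom_le fun U hU => ?_
    have : U = ⋃ p : {p : ℕ × ℕ // P.level p.1 p.2 ⊆ U}, P.level p.1.1 p.1.2 := by
      ext x
      simp only [mem_iUnion]
      constructor
      · intro hx
        obtain ⟨n, j, h1, h2⟩ := exists_level_subset hU hx
        exact ⟨⟨(n, j), h2⟩, h1⟩
      · rintro ⟨p, hp⟩
        exact p.2 hp
    rw [this]
    exact MeasurableSet.iUnion fun p =>
      MeasurableSpace.measurableSet_generateFrom (Or.inr ⟨_, _, rfl⟩)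
  · refine MeasurableSpace.generateFrom_le ?_
    rintro A (rfl | ⟨n, j, rfl⟩)
    · exact MeasurableSet.empty
    · exact P.measurableSet_level n j

theorem level_inter {n m : ℕ} (hnm : n ≤ m) (j k : ℕ) :
    P.level n j ∩ P.level m k = P.level m k ∨ P.level n j ∩ P.level m k = ∅ := by
  by_cases h : (P.level n j ∩ P.level m k).Nonempty
  · left
    obtain ⟨x, hx1, hx2⟩ := h
    refine inter_eq_right.2 fun y hy => ?_
    exact (eq_down hnm (Eq.trans hy (Eq.symm hx2))).trans hx1
  · right
    exact not_nonempty_iff_eq_empty.1 h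

theorem isPiSystem_levels (P : NFCseq) : IsPiSystem P.levels := by
  rintro A (rfl | ⟨n, j, rfl⟩) B (rfl | ⟨m, k, rfl⟩) hne
  · simp at hne
  · simp at hne
  · simp at hne
  · rcases le_total n m with h | h
    · rcases level_inter (P := P) h j k with h' | h'
      · exact Or.inr ⟨m, k, h'⟩
      · exact Or.inl h'
    · rw [inter_comm]
      rcases level_inter (P := P) h k j with h' | h'
      · exact Or.inr ⟨n, j, h'⟩
      · exact Or.inl h'

theorem level_eq_empty {n j : ℕ} (h : P.hgt n ≤ j) : P.level n j = ∅ := by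
  ext x
  simp only [mem_empty_iff_false, iff_false]
  intro hx
  have := val_lt (x := x) hx
  omega

theorem level_split (P : NFCseq) {n j : ℕ} (hj : j < P.hgt n) :
    P.level n j = P.level (n + 1) j ∪ (P.level (n + 1) (j + P.hgt n + P.spa n) ∪
      P.level (n + 1) (j + 2 * P.hgt n + 2 * P.spa n + 1)) := by
  ext x
  constructor
  · intro hx
    obtain ⟨_, a, ha, _, h⟩ := lift_step (x := x) hx
    rcases h with ⟨rfl, _⟩ | ⟨rfl, _⟩ | ⟨rfl, _⟩
    · exact Or.inl ha
    · exact Or.inr (Or.inl ha)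
    · exact Or.inr (Or.inr ha)
  · rintro (hx | hx | hx)
    all_goals
      refine (proj_step (x := x) hx).trans (pmap_eq_some.2 ⟨hj, ?_⟩)
      omega

theorem level_disjoint (P : NFCseq) {n j k : ℕ} (h : j ≠ k) :
    Disjoint (P.level n j) (P.level n k) := by
  refine Set.disjoint_left.2 fun x hx hx' => h ?_
  exact Option.some.inj (Eq.trans (Eq.symm hx) hx')

end NFCseq

/-! ### The action of `T` on coordinates -/

namespace NFC

variable {S : NFC}

open NFCseq

theorem T_succ {x : S.toNFCseq.Xpt} {n j : ℕ} (h : x.1 n = some j)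
    (hj : j + 1 < S.toNFCseq.hgt n) : (S.T x).1 n = some (j + 1) := by
  obtain ⟨N, hN⟩ := S.T_up x
  -- downward induction on the tower, starting from a tower where `T_up` applies
  suffices H : ∀ k n j, N ≤ n + k → x.1 n = some j → j + 1 < S.toNFCseq.hgt n →
      (S.T x).1 n = some (j + 1) from H N n j (by omega) h hj
  intro k
  induction k with
  | zero =>
    intro n j hn h hj
    obtain ⟨j', h1, h2⟩ := hN n hn
    rw [h] at h1
    cases h1
    exact h2
  | succ k ih =>
    intro n j hn h hj
    obtain ⟨h0, a, ha, hab, _⟩ := lift_step h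
    have hp := (pmap_eq_some.1 hab).2
    have hh := S.toNFCseq.hgt_succ_eq n
    have := ih (n + 1) a (by omega) ha (by omega)
    rw [proj_step this]
    exact pmap_eq_some.2 ⟨hj, by omega⟩

theorem T_pred {x : S.toNFCseq.Xpt} {n j : ℕ} (h : (S.T x).1 n = some (j + 1)) :
    x.1 n = some j := by
  obtain ⟨N, hN⟩ := S.T_up x
  suffices H : ∀ k n j, N ≤ n + k → (S.T x).1 n = some (j + 1) → x.1 n = some j from
    H N n j (by omega) h
  intro k
  induction k with
  | zero =>
    intro n j hn h
    obtain ⟨j', h1, h2⟩ := hN n hn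
    rw [h] at h2
    have : j = j' := by simpa using h2
    rw [this]; exact h1
  | succ k ih =>
    intro n j hn h
    obtain ⟨h0, a, ha, hab, _⟩ := lift_step h
    have hp := (pmap_eq_some.1 hab).2
    obtain ⟨a', rfl⟩ : ∃ a', a = a' + 1 := ⟨a - 1, by omega⟩
    have := ih (n + 1) a' (by omega) ha
    rw [proj_step this]
    exact pmap_eq_some.2 ⟨by omega, by omega⟩

theorem iter_up {x : S.toNFCseq.Xpt} {n j : ℕ} (k : ℕ) (h : x.1 n = some j)
    (hj : j + k < S.toNFCseq.hgt n) : (S.T^[k] x).1 n = some (j + k) := by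
  induction k with
  | zero => exact h
  | succ k ih =>
    rw [Function.iterate_succ_apply']
    exact T_succ (ih (by omega)) (by omega)

theorem iter_down {x : S.toNFCseq.Xpt} {n j : ℕ} (k : ℕ)
    (h : (S.T^[k] x).1 n = some (j + k)) : x.1 n = some j := by
  induction k with
  | zero => exact h
  | succ k ih =>
    rw [Function.iterate_succ_apply'] at h
    exact ih (T_pred h)

/-- In every large enough tower, `x` is at distance more than `k` from the top. -/
theorem iter_ev (x : S.toNFCseq.Xpt) (k : ℕ) : ∀ᶠ n in atTop,
    ∃ j, x.1 n = some j ∧ j + k < S.toNFCseq.hgt n ∧ (S.T^[k] x).1 n = some (j + k) := by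
  induction k with
  | zero =>
    obtain ⟨N, hN⟩ := ev_some x
    filter_upwards [eventually_ge_atTop N] with n hn
    obtain ⟨j, hj⟩ := hN n hn
    exact ⟨j, hj, val_lt hj, hj⟩
  | succ k ih =>
    obtain ⟨N, hN⟩ := S.T_up (S.T^[k] x)
    filter_upwards [ih, eventually_ge_atTop N] with n h hn
    obtain ⟨j, h1, h2, h3⟩ := h
    obtain ⟨j', h4, h5⟩ := hN n hn
    rw [h3] at h4
    cases h4
    rw [← Function.iterate_succ_apply' (f := S.T)] at h5
    exact ⟨j, h1, val_lt h5, h5⟩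

/-! ### Points on the same orbit -/

/-- Points whose indices differ by a fixed amount in all large towers lie on the same orbit. -/
theorem rel_of_eq {y z : S.toNFCseq.Xpt} {a b : ℕ}
    (h : ∀ᶠ n in atTop, ∃ p r, y.1 n = some p ∧ z.1 n = some r ∧ p + a = r + b) :
    S.T^[a] y = S.T^[b] z := by
  obtain ⟨N, hN⟩ := eventually_atTop.1 (h.and ((iter_ev y a).and (iter_ev z b)))
  refine ext_freq fun M => ⟨max N M, le_max_right _ _, ?_⟩
  obtain ⟨⟨p, r, hp, hr, he⟩, ⟨p', hp', _, h1⟩, ⟨r', hr', _, h2⟩⟩ := hN _ (le_max_left N M)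
  rw [hp] at hp'
  rw [hr] at hr'
  cases hp'
  cases hr'
  rw [h1, h2, he]

/-- On an orbit the difference of indices is eventually constant, so the offsets of the subcolumns
agree; distinct subcolumns have distinct offsets. -/
theorem tcol_of_rel {y z : S.toNFCseq.Xpt} {a b : ℕ} (h : S.T^[a] y = S.T^[b] z) :
    ∀ᶠ n in atTop, S.toNFCseq.tcol n y = S.toNFCseq.tcol n z := by
  obtain ⟨N, hN⟩ := eventually_atTop.1 ((iter_ev y a).and (iter_ev z b))
  have key : ∀ n, N ≤ n → ∃ p r, y.1 n = some p ∧ z.1 n = some r ∧ p + a = r + b := by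
    intro n hn
    obtain ⟨⟨p, hp, _, h1⟩, ⟨r, hr, _, h2⟩⟩ := hN n hn
    rw [h, h2] at h1
    exact ⟨p, r, hp, hr, (Option.some.inj h1).symm⟩
  filter_upwards [eventually_ge_atTop N] with n hn
  obtain ⟨p, r, hp, hr, he⟩ := key n hn
  obtain ⟨p', r', hp', hr', he'⟩ := key (n + 1) (by omega)
  obtain ⟨_, p'', hp'', _, h3⟩ := lift_step hp
  obtain ⟨_, r'', hr'', _, h4⟩ := lift_step hr
  rw [hp'] at hp''
  rw [hr'] at hr''
  cases hp''
  cases hr''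
  have := S.toNFCseq.hgt_pos n
  omega

/-- If two points eventually lie in the same subcolumns, their indices increase by the same
amounts, so the difference of indices is eventually constant. -/
theorem rel_of_tcol {y z : S.toNFCseq.Xpt}
    (h : ∀ᶠ n in atTop, S.toNFCseq.tcol n y = S.toNFCseq.tcol n z) :
    ∃ a b : ℕ, S.T^[a] y = S.T^[b] z := by
  obtain ⟨N, hN⟩ := eventually_atTop.1 h
  obtain ⟨N₁, hN₁⟩ := ev_some y
  obtain ⟨N₂, hN₂⟩ := ev_some z
  set M := max N (max N₁ N₂)
  obtain ⟨p, hp⟩ := hN₁ M (by omega)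
  obtain ⟨r, hr⟩ := hN₂ M (by omega)
  refine ⟨r, p, rel_of_eq (eventually_atTop.2 ⟨M, fun n hn => ?_⟩)⟩
  induction n, hn using Nat.le_induction with
  | base => exact ⟨p, r, hp, hr, by omega⟩
  | succ n hn ih =>
    obtain ⟨p', r', hp', hr', he⟩ := ih
    obtain ⟨_, p'', hp'', _, h3⟩ := lift_step hp'
    obtain ⟨_, r'', hr'', _, h4⟩ := lift_step hr'
    refine ⟨p'', r'', hp'', hr'', ?_⟩
    have := hN n (by omega)
    omega

theorem orbit_iter {d : ℕ} {o : ℤ → S.Xd d} (ho : ∀ j, S.Td d (o j) = o (j + 1))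
    (k : ℕ) (j : ℤ) (i : Fin d) : S.T^[k] (o j i) = o (j + k) i := by
  induction k with
  | zero => simp
  | succ k ih =>
    rw [Function.iterate_succ_apply', ih]
    have := congrFun (ho (j + k)) i
    rw [show j + ((k + 1 : ℕ) : ℤ) = j + k + 1 by push_cast; ring, ← this]
    rfl

theorem rel_orbit {d : ℕ} {o : ℤ → S.Xd d} (ho : ∀ j, S.Td d (o j) = o (j + 1))
    (j : ℤ) (i : Fin d) : S.T^[(-j).toNat] (o j i) = S.T^[j.toNat] (o 0 i) := by
  rw [orbit_iter ho, orbit_iter ho]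
  congr 1
  omega

theorem rel_iff {d : ℕ} {o : ℤ → S.Xd d} (ho : ∀ j, S.Td d (o j) = o (j + 1)) (i i₀ : Fin d) :
    (∃ a b : ℕ, S.T^[a] (o 0 i) = S.T^[b] (o 0 i₀)) ↔ ∃ e : ℤ, o 0 i = o e i₀ := by
  constructor
  · rintro ⟨a, b, h⟩
    refine ⟨b - a, S.T_inj.iterate a ?_⟩
    rw [h, orbit_iter ho, orbit_iter ho]
    congr 1
    omega
  · rintro ⟨e, he⟩
    exact ⟨_, _, by rw [he]; exact rel_orbit ho e i₀⟩

/-- A uniform reading of `preT e A` for both signs of `e`: after applying a large power of `T`,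
only forward iterates occur. -/
theorem preT_spec {e : ℤ} {A : Set S.toNFCseq.Xpt} {y : S.toNFCseq.Xpt} (h : y ∈ S.preT e A)
    {M : ℕ} (hM : e ≤ M) : ∃ z ∈ A, S.T^[(M - e).toNat] z = S.T^[M] y := by
  cases e with
  | ofNat k =>
    refine ⟨S.T^[k] y, h, ?_⟩
    rw [← Function.iterate_add_apply]
    simp only [Int.ofNat_eq_natCast] at hM ⊢
    congr 1
    omega
  | negSucc k =>
    obtain ⟨z, hz, rfl⟩ := h
    refine ⟨z, hz, ?_⟩
    rw [← Function.iterate_add_apply]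
    rfl

/-! ### Uniqueness of the invariant measure -/

theorem preimage_level {n j : ℕ} (hj : j + 1 < S.toNFCseq.hgt n) :
    S.T ⁻¹' (S.toNFCseq.level n (j + 1)) = S.toNFCseq.level n j := by
  ext x
  exact ⟨fun h => T_pred h, fun h => T_succ h hj⟩

theorem level_eq_zero_level {ν : Measure S.toNFCseq.Xpt} (hν : MeasurePreserving S.T ν ν)
    {n j : ℕ} (hj : j < S.toNFCseq.hgt n) :
    ν (S.toNFCseq.level n j) = ν (S.toNFCseq.level n 0) := by
  induction j with
  | zero => rfl
  | succ j ih =>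
    rw [← ih (by omega), ← preimage_level hj,
      hν.measure_preimage (S.toNFCseq.measurableSet_level n (j + 1)).nullMeasurableSet]

theorem level_three {ν : Measure S.toNFCseq.Xpt} (hν : MeasurePreserving S.T ν ν) (n : ℕ) :
    ν (S.toNFCseq.level n 0) = 3 * ν (S.toNFCseq.level (n + 1) 0) := by
  have h0 := S.toNFCseq.hgt_pos n
  have hs := S.toNFCseq.hgt_succ_eq n
  have hm := S.toNFCseq.measurableSet_level (n + 1)
  rw [S.toNFCseq.level_split h0, measure_union _ ((hm _).union (hm _)), measure_union _ (hm _),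
    level_eq_zero_level hν (j := 0 + S.toNFCseq.hgt n + S.toNFCseq.spa n) (by omega),
    level_eq_zero_level hν (j := 0 + 2 * S.toNFCseq.hgt n + 2 * S.toNFCseq.spa n + 1) (by omega)]
  · ring
  · exact S.toNFCseq.level_disjoint (by omega)
  · exact Set.disjoint_union_right.2
      ⟨S.toNFCseq.level_disjoint (by omega), S.toNFCseq.level_disjoint (by omega)⟩

theorem level_pow {ν : Measure S.toNFCseq.Xpt} (hν : MeasurePreserving S.T ν ν) (n : ℕ) :
    ν (S.toNFCseq.level 0 0) = 3 ^ n * ν (S.toNFCseq.level n 0) := by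
  induction n with
  | zero => simp
  | succ n ih => rw [ih, level_three hν n]; ring

/-- Invariant measures finite on the unique level of tower `0` are multiples of `μ`: by invariance
and cutting into three they are so on all levels. -/
theorem eq_smul_of_invariant {ν : Measure S.toNFCseq.Xpt} (hν : MeasurePreserving S.T ν ν)
    (hfin : ν (S.toNFCseq.level 0 0) ≠ ⊤) : ν = ν (S.toNFCseq.level 0 0) • S.μ := by
  have hlev : ∀ n j, j < S.toNFCseq.hgt n →
      ν (S.toNFCseq.level n j) = ν (S.toNFCseq.level 0 0) * (3 : ℝ≥0∞)⁻¹ ^ n := by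
    intro n j hj
    rw [level_eq_zero_level hν hj, level_pow hν n, mul_comm, ← mul_assoc, ← mul_pow,
      ENNReal.inv_mul_cancel (by norm_num) (by norm_num), one_pow, one_mul]
  refine Measure.ext_of_generateFrom_of_cover_subset (T := S.toNFCseq.levels)
    S.toNFCseq.borel_eq_levels S.toNFCseq.isPiSystem_levels (fun _ h => h) ?_ ?_ ?_ ?_
  · refine ((countable_singleton (∅ : Set S.toNFCseq.Xpt)).union
      (countable_range (fun p : ℕ × ℕ => S.toNFCseq.level p.1 p.2))).mono ?_
    rintro A (rfl | ⟨n, j, rfl⟩)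
    · exact Or.inl rfl
    · exact Or.inr ⟨(n, j), rfl⟩
  · refine eq_univ_of_forall fun x => ?_
    obtain ⟨N, hN⟩ := ev_some x
    obtain ⟨j, hj⟩ := hN N le_rfl
    exact ⟨_, Or.inr ⟨N, j, rfl⟩, hj⟩
  · rintro A (rfl | ⟨n, j, rfl⟩)
    · simp
    · by_cases hj : j < S.toNFCseq.hgt n
      · rw [hlev n j hj]
        exact ENNReal.mul_ne_top hfin (ENNReal.pow_ne_top (by simp))
      · rw [level_eq_empty (by omega)]; simp
  · rintro A (rfl | ⟨n, j, rfl⟩)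
    · simp
    · by_cases hj : j < S.toNFCseq.hgt n
      · rw [hlev n j hj, Measure.smul_apply, S.μ_level n j hj, smul_eq_mul]
      · rw [level_eq_empty (by omega)]; simp

theorem eq_zero_of_level {ν : Measure S.toNFCseq.Xpt} (hν : MeasurePreserving S.T ν ν)
    (h : ν (S.toNFCseq.level 0 0) = 0) : ν = 0 := by
  rw [eq_smul_of_invariant hν (by simp [h]), h, zero_smul]

end NFC

/-! ### Graph measures -/

namespace NFCX

open NFCseq NFC

variable {S : NFCX} {d : ℕ} {σ : Measure (S.toNFC.Xd d)} {o : ℤ → S.toNFC.Xd d}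

/-- A graph measure puts the coordinates of a typical point on a common `T`-orbit. -/
theorem rel_of_graph (hto : S.IsTypicalOrbit d σ o) (hg : S.toNFC.IsGraphMeasure σ)
    (i i₀ : Fin d) : ∃ a b : ℕ, S.T^[a] (o 0 i) = S.T^[b] (o 0 i₀) := by
  obtain ⟨-, -, hpos, -⟩ := hto
  obtain ⟨α, -, -, e, he⟩ := hg
  obtain ⟨M, hM⟩ : ∃ M : ℕ, ∀ i, (e i).natAbs ≤ M :=
    ⟨Finset.univ.sup fun i => (e i).natAbs,
      fun i => Finset.le_sup (f := fun i => (e i).natAbs) (Finset.mem_univ i)⟩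
  refine ⟨(M - e i).toNat, (M - e i₀).toNat, NFC.rel_of_eq ?_⟩
  have hev : ∀ᶠ n in atTop, ∀ i : Fin d, ∃ j, (o 0 i).1 n = some j ∧
      j + 2 * M < S.toNFC.toNFCseq.hgt n ∧ (S.T^[2 * M] (o 0 i)).1 n = some (j + 2 * M) :=
    eventually_all.2 fun i => iter_ev (o 0 i) (2 * M)
  filter_upwards [hev] with n hn
  choose p hp hlt _ using hn
  refine ⟨p i, p i₀, hp i, hp i₀, ?_⟩
  have hσ : 0 < σ (Set.univ.pi fun i => S.toNFC.toNFCseq.level n (p i)) := by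
    refine hpos n _ ⟨p, fun i => by have := hlt i; omega, ?_⟩ (fun i _ => hp i)
    ext y; simp
  rw [he _ fun i => S.toNFC.toNFCseq.measurableSet_level n (p i)] at hσ
  obtain ⟨y, hy⟩ : (⋂ i, S.toNFC.preT (e i) (S.toNFC.toNFCseq.level n (p i))).Nonempty := by
    rw [nonempty_iff_ne_empty]
    intro h0
    rw [h0] at hσ
    simp at hσ
  -- `j_n(T^M y) = j_n(x_i) + M - e_i` for every `i`
  have key : ∀ i, (S.T^[M] y).1 n = some (p i + (M - e i).toNat) := by
    intro i
    have h1 := hM i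
    obtain ⟨z, hz, hzy⟩ := preT_spec (mem_iInter.1 hy i) (M := M) (by omega)
    have h2 := hlt i
    have h3 := iter_up (S := S.toNFC) (M - e i).toNat (x := z) hz (by omega)
    rwa [hzy] at h3
  have := key i
  rw [key i₀] at this
  exact (Option.some.inj this).symm

/-- Boxes that the typical orbit never visits are null. -/
theorem box_null (hR : S.toNFC.IsRadon d σ) (hto : S.IsTypicalOrbit d σ o) {n : ℕ}
    {v : Fin d → ℕ} (hv : ∀ i, v i < S.toNFC.toNFCseq.hgt n)
    (hno : ∀ j, ¬ ∀ i, (o j i).1 n = some (v i)) :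
    σ {y : S.toNFC.Xd d | ∀ i, (y i).1 n = some (v i)} = 0 := by
  set B : Set (S.toNFC.Xd d) := {y | ∀ i, (y i).1 n = some (v i)} with hB
  have hsub : B ⊆ S.toNFC.towerD d n := fun y hy i => by
    show (y i).1 n ≠ none
    rw [hy i]; simp
  rcases eq_or_ne (σ (S.toNFC.towerD d n)) 0 with h0 | h0
  · exact measure_mono_null hsub h0
  have hlim := hto.2.1 0 n (pos_iff_ne_zero.2 h0) B ⟨v, hv, rfl⟩ (fun _ => 0) (fun k => (k : ℤ))
    (fun _ => le_rfl) (fun k => by positivity)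
    (by simpa using tendsto_natCast_atTop_atTop (R := ℤ))
  have hnot : ∀ j, o j ∉ B := fun j hj => hno j hj
  simp only [hnot, Finset.filter_false, Finset.card_empty, Nat.cast_zero, zero_div] at hlim
  have h1 := tendsto_nhds_unique hlim tendsto_const_nhds
  have h2 : (σ (S.toNFC.towerD d n)).toReal ≠ 0 := ENNReal.toReal_ne_zero.2 ⟨h0, (hR n).ne⟩
  have h3 : (σ B).toReal = 0 := by
    rcases div_eq_zero_iff.1 h1 with h | h
    · exact h
    · exact absurd h h2
  exact ((ENNReal.toReal_eq_zero_iff _).1 h3).resolve_right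
    ((measure_mono hsub).trans_lt (hR n)).ne

/-- Almost every point has all its boxes visited by the typical orbit. -/
theorem ae_visited (hR : S.toNFC.IsRadon d σ) (hto : S.IsTypicalOrbit d σ o) :
    ∀ᵐ y ∂σ, ∀ (n : ℕ) (v : Fin d → ℕ), (∀ i, (y i).1 n = some (v i)) →
      ∃ j, ∀ i, (o j i).1 n = some (v i) := by
  rw [ae_all_iff]
  intro n
  rw [ae_all_iff]
  intro v
  by_cases hno : ∃ j, ∀ i, (o j i).1 n = some (v i)
  · exact Eventually.of_forall fun _ _ => hno
  by_cases hv : ∀ i, v i < S.toNFC.toNFCseq.hgt n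
  · have := box_null hR hto hv (not_exists.1 hno)
    filter_upwards [measure_eq_zero_iff_ae_notMem.1 this] with y hy h
    exact absurd h hy
  · refine Eventually.of_forall fun y hy => absurd (fun i => val_lt (hy i)) hv

/-- The linear relations between the coordinates of the typical point pass to almost every
point. -/
theorem ae_rel (hR : S.toNFC.IsRadon d σ) (hto : S.IsTypicalOrbit d σ o) {q : ℤ → S.toNFC.Xd d}
    (hq : ∀ j, S.toNFC.Td d (q j) = q (j + 1)) {i₀ : Fin d} {k : Fin d → ℕ}
    (hk : ∀ j i, o j i = q (j + k i) i₀) :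
    ∀ᵐ y ∂σ, ∀ i, S.T^[k i₀] (y i) = S.T^[k i] (y i₀) := by
  filter_upwards [ae_visited hR hto] with y hy i
  obtain ⟨M, hM⟩ : ∃ M : ℕ, ∀ i, k i ≤ M :=
    ⟨Finset.univ.sup k, fun i => Finset.le_sup (Finset.mem_univ i)⟩
  refine NFC.rel_of_eq ?_
  have hev : ∀ᶠ n in atTop, ∀ i : Fin d, ∃ j, (y i).1 n = some j ∧
      j + M < S.toNFC.toNFCseq.hgt n ∧ (S.T^[M] (y i)).1 n = some (j + M) :=
    eventually_all.2 fun i => iter_ev (y i) M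
  filter_upwards [hev] with n hn
  choose p hp hlt _ using hn
  refine ⟨p i, p i₀, hp i, hp i₀, ?_⟩
  obtain ⟨j, hj⟩ := hy n p hp
  have key : ∀ i, (q (j + M) i₀).1 n = some (p i + (M - k i)) := by
    intro i
    have h1 := hM i
    have h2 := hlt i
    have h3 := iter_up (S := S.toNFC) (M - k i) (hj i) (by omega)
    rw [hk, orbit_iter hq] at h3
    rwa [show j + k i + ((M - k i : ℕ) : ℤ) = j + M by omega] at h3
  have := key i
  rw [key i₀] at this
  have h4 := Option.some.inj this
  have h5 := hM i
  have h6 := hM i₀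
  omega

theorem graph_of_rel (hσ0 : σ ≠ 0) (hR : S.toNFC.IsRadon d σ)
    (herg : Ergodic (S.toNFC.Td d) σ) (hto : S.IsTypicalOrbit d σ o) (i₀ : Fin d)
    {e : Fin d → ℤ} (he : ∀ i, o 0 i = o (e i) i₀) : S.toNFC.IsGraphMeasure σ := by
  have ho := hto.1
  obtain ⟨M, hM⟩ : ∃ M : ℕ, ∀ i, (e i).natAbs ≤ M :=
    ⟨Finset.univ.sup fun i => (e i).natAbs,
      fun i => Finset.le_sup (f := fun i => (e i).natAbs) (Finset.mem_univ i)⟩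
  -- shifting the reference orbit by `M` makes all exponents nonnegative
  obtain ⟨k, hk⟩ : ∃ k : Fin d → ℕ, ∀ i, (k i : ℤ) = e i + M :=
    ⟨fun i => (e i + M).toNat, fun i => by have := hM i; exact Int.toNat_of_nonneg (by omega)⟩
  have he' : ∀ j i, o j i = o (j + e i) i₀ := by
    intro j i
    apply S.T_inj.iterate (-j).toNat
    rw [rel_orbit ho, he i, orbit_iter ho, orbit_iter ho]
    congr 1
    omega
  have hrel := ae_rel hR hto (q := fun j => o (j - M)) (i₀ := i₀) (k := k)
    (fun j => by rw [ho]; congr 1; ring)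
    (fun j i => by rw [he' j i]; simp only [hk]; congr 1; ring)
  set ν : Measure S.toNFC.toNFCseq.Xpt := σ.map (fun y => y i₀) with hνdef
  have hmeas : Measurable (fun y : S.toNFC.Xd d => y i₀) := measurable_pi_apply i₀
  have hν : MeasurePreserving S.T ν ν := by
    refine ⟨S.T_meas, ?_⟩
    rw [hνdef, Measure.map_map S.T_meas hmeas]
    conv_rhs => rw [← herg.toMeasurePreserving.map_eq]
    rw [Measure.map_map hmeas herg.measurable]
    rfl
  -- a level in the middle of a high tower has finite `ν`-measure
  have hfin : ν (S.toNFC.toNFCseq.level 0 0) ≠ ⊤ := by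
    obtain ⟨L, hL⟩ : ∃ L : ℕ, ∀ i, k i ≤ L :=
      ⟨Finset.univ.sup k, fun i => Finset.le_sup (Finset.mem_univ i)⟩
    have hh := S.toNFC.toNFCseq.lt_hgt (2 * L)
    rw [level_pow hν (2 * L), ← level_eq_zero_level hν (j := L) (by omega)]
    refine ENNReal.mul_ne_top (ENNReal.pow_ne_top (by norm_num)) ?_
    rw [hνdef, Measure.map_apply hmeas (S.toNFC.toNFCseq.measurableSet_level _ _)]
    refine ((measure_mono_ae ?_).trans_lt (hR (2 * L))).ne
    filter_upwards [hrel] with y hy hyL i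
    have h1 := iter_up (S := S.toNFC) (k i) (x := y i₀) hyL (by have := hL i; omega)
    rw [← hy i, show L + k i = (L + k i - k i₀) + k i₀ by have := hL i₀; omega] at h1
    have h2 := iter_down _ h1
    show (y i).1 (2 * L) ≠ none
    rw [h2]; simp
  have hpos : ν (S.toNFC.toNFCseq.level 0 0) ≠ 0 := by
    intro h0
    have h1 := eq_zero_of_level hν h0
    rw [hνdef, Measure.map_eq_zero_iff hmeas.aemeasurable] at h1
    exact hσ0 h1
  refine ⟨ν (S.toNFC.toNFCseq.level 0 0), pos_iff_ne_zero.2 hpos, hfin, fun i => (k i : ℤ), ?_⟩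
  intro A hA
  have hAm : MeasurableSet (⋂ i, S.toNFC.preT (k i : ℤ) (A i)) :=
    MeasurableSet.iInter fun i => (S.T_meas.iterate (k i)) (hA i)
  have hinv := (herg.toMeasurePreserving.iterate (k i₀)).measure_preimage
    (MeasurableSet.univ_pi hA).nullMeasurableSet
  have hTd : ∀ (n : ℕ) (y : S.toNFC.Xd d) i, ((S.toNFC.Td d)^[n] y) i = S.T^[n] (y i) := by
    intro n y i
    induction n generalizing y with
    | zero => rfl
    | succ n ih => rw [Function.iterate_succ_apply, Function.iterate_succ_apply, ih]; rfl
  calc σ (Set.univ.pi A) = σ ((S.toNFC.Td d)^[k i₀] ⁻¹' Set.univ.pi A) := hinv.symm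
    _ = σ ((fun y => y i₀) ⁻¹' ⋂ i, S.toNFC.preT (k i : ℤ) (A i)) := by
        apply measure_congr
        filter_upwards [hrel] with y hy
        apply propext
        show (S.toNFC.Td d)^[k i₀] y ∈ Set.univ.pi A ↔ y i₀ ∈ ⋂ i, S.toNFC.preT (k i : ℤ) (A i)
        simp only [Set.mem_pi, mem_univ, true_imp_iff, mem_iInter, hTd]
        refine forall_congr' fun i => ?_
        rw [hy i]
        rfl
    _ = ν (⋂ i, S.toNFC.preT (k i : ℤ) (A i)) := (Measure.map_apply hmeas hAm).symm
    _ = _ := by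
        conv_lhs => rw [eq_smul_of_invariant hν hfin]
        rfl

end NFCX

/-- Equivalence of: (i) `σ` is a graph measure arising from powers of `T`;
(ii) `x_i = T^{e_i} x_1` for some integers `e_i`; (iii) `t_n(x_1) = ⋯ = t_n(x_d)` for all
large `n`; (iv) `t_n(T^j x_1) = ⋯ = t_n(T^j x_d)` for some `j` and all large `n`. -/
theorem stmt11 (S : NFCX) (d : ℕ) (hd : 2 ≤ d)
    (σ : Measure (S.toNFC.Xd d)) (hσ0 : σ ≠ 0) (hR : S.toNFC.IsRadon d σ)
    (herg : Ergodic (S.toNFC.Td d) σ)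
    (hconull : σ {y : S.toNFC.Xd d | ¬ ∀ i, y i ∈ S.Xinf} = 0)
    (o : ℤ → S.toNFC.Xd d) (hto : S.IsTypicalOrbit d σ o) :
    (S.toNFC.IsGraphMeasure σ ↔
      ∃ e : Fin d → ℤ, ∀ i : Fin d, (o 0) i = (o (e i)) ⟨0, by omega⟩) ∧
    ((∃ e : Fin d → ℤ, ∀ i : Fin d, (o 0) i = (o (e i)) ⟨0, by omega⟩) ↔
      ∃ N : ℕ, ∀ n : ℕ, N ≤ n → ∀ i i' : Fin d,
        S.toNFC.toNFCseq.tcol n ((o 0) i) = S.toNFC.toNFCseq.tcol n ((o 0) i')) ∧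
    ((∃ N : ℕ, ∀ n : ℕ, N ≤ n → ∀ i i' : Fin d,
        S.toNFC.toNFCseq.tcol n ((o 0) i) = S.toNFC.toNFCseq.tcol n ((o 0) i')) ↔
      ∃ j : ℤ, ∃ N : ℕ, ∀ n : ℕ, N ≤ n → ∀ i i' : Fin d,
        S.toNFC.toNFCseq.tcol n ((o j) i) = S.toNFC.toNFCseq.tcol n ((o j) i')) := by
  have ho := hto.1
  set i₀ : Fin d := ⟨0, by omega⟩
  have h23 : (∃ e : Fin d → ℤ, ∀ i : Fin d, (o 0) i = (o (e i)) i₀) ↔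
      ∀ i, ∃ a b : ℕ, S.T^[a] (o 0 i) = S.T^[b] (o 0 i₀) := by
    refine (Classical.skolem (p := fun i (e : ℤ) => o 0 i = o e i₀)).symm.trans ?_
    exact forall_congr' fun i => (NFC.rel_iff ho i i₀).symm
  refine ⟨⟨fun hg => h23.2 fun i => NFCX.rel_of_graph hto hg i i₀,
    fun ⟨e, he⟩ => NFCX.graph_of_rel hσ0 hR herg hto i₀ he⟩, ?_, ?_⟩
  · rw [h23]
    constructor
    · intro h
      have hev : ∀ᶠ n in atTop, ∀ i : Fin d, S.toNFC.toNFCseq.tcol n (o 0 i) =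
          S.toNFC.toNFCseq.tcol n (o 0 i₀) :=
        eventually_all.2 fun i => by
          obtain ⟨a, b, hab⟩ := h i
          exact NFC.tcol_of_rel hab
      obtain ⟨N, hN⟩ := eventually_atTop.1 hev
      exact ⟨N, fun n hn i i' => (hN n hn i).trans (hN n hn i').symm⟩
    · rintro ⟨N, hN⟩ i
      exact NFC.rel_of_tcol (eventually_atTop.2 ⟨N, fun n hn => hN n hn i i₀⟩)
  · constructor
    · rintro ⟨N, hN⟩
      exact ⟨0, N, hN⟩
    · rintro ⟨j, N, hN⟩
      have hev : ∀ᶠ n in atTop, ∀ i : Fin d, S.toNFC.toNFCseq.tcol n (o j i) =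
          S.toNFC.toNFCseq.tcol n (o 0 i) :=
        eventually_all.2 fun i => NFC.tcol_of_rel (NFC.rel_orbit ho j i)
      obtain ⟨N', hN'⟩ := eventually_atTop.1 hev
      refine ⟨max N N', fun n hn i i' => ?_⟩
      rw [← hN' n (by omega) i, ← hN' n (by omega) i']
      exact hN n (by omega) i i'
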